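/- Let A ∈ 𝓡 be a fixed set and let X^(1), X^(2) be (arbitrarily dependent) random vectors in [0,∞)^d with distributions F_1, F_2 respectively. Suppose F_2(xA)/F_1(xA) → c as x → ∞ for some constant c ∈ (0,∞). Then for each of the classes 𝓑 ∈ {𝓟𝓓, 𝓣, 𝓐, 𝓓 ∩ 𝓟𝓓, 𝓓 ∩ 𝓐}: if F_1 ∈ 𝓑_A then F_2 ∈ 𝓑_A. -/

import Mathlib

open MeasureTheory ProbabilityTheory Filter Topology
open scoped Pointwise

namespace Paper

variable {d : ℕ} {Ω : Type*} [MeasurableSpace Ω]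

/-- The family `𝓡` of open, increasing sets with convex complement, bounded away from `0`. -/
structure IsRSet (d : ℕ) (A : Set (Fin d → ℝ)) : Prop where
  isOpen : IsOpen A
  increasing : ∀ u ∈ A, ∀ v : Fin d → ℝ, (∀ i, 0 ≤ v i) → u + v ∈ A
  convex_compl : Convex ℝ Aᶜ
  zero_notMem_closure : (0 : Fin d → ℝ) ∉ closure A

/-- `Y_A(z) = sup { u > 0 : z ∈ u A }`. -/
noncomputable def suprA (A : Set (Fin d → ℝ)) (z : Fin d → ℝ) : ℝ :=
  sSup {u : ℝ | 0 < u ∧ z ∈ u • A}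

/-- `F_A`, the distribution of `Y_A = suprA A ∘ X` under `P`. -/
noncomputable def FA (P : Measure Ω) (A : Set (Fin d → ℝ)) (X : Ω → Fin d → ℝ) :
    Measure ℝ :=
  P.map (fun ω => suprA A (X ω))

/-- `F (x A) = P[X ∈ x A]` as a real number. -/
noncomputable def vTail (P : Measure Ω) (A : Set (Fin d → ℝ)) (X : Ω → Fin d → ℝ)
    (x : ℝ) : ℝ :=
  (P {ω | X ω ∈ x • A}).toReal

/-- Tail `ν(x, ∞)` of a measure on `ℝ`, as a real number. -/
noncomputable def mTail (ν : Measure ℝ) (x : ℝ) : ℝ := (ν (Set.Ioi x)).toReal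

/-- Convolution of two measures on `ℝ`. -/
noncomputable def mConv (μ ν : Measure ℝ) : Measure ℝ :=
  (μ.prod ν).map (fun p => p.1 + p.2)

/-- `n`-fold convolution power. -/
noncomputable def mConvN (ν : Measure ℝ) : ℕ → Measure ℝ
  | 0 => Measure.dirac 0
  | n + 1 => mConv (mConvN ν n) ν

/-- Long-tailed class `𝓛`. -/
def MemL (ν : Measure ℝ) : Prop :=
  ∀ a : ℝ, 0 < a → Tendsto (fun x => mTail ν (x - a) / mTail ν x) atTop (𝓝 1)

/-- Subexponential class `𝓢`. -/
def MemS (ν : Measure ℝ) : Prop :=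
  Tendsto (fun x => mTail (mConv ν ν) x / mTail ν x) atTop (𝓝 2)

/-- Dominatedly varying class `𝓓`. -/
def MemD (ν : Measure ℝ) : Prop :=
  ∀ y : ℝ, 0 < y → y < 1 → ∃ C : ℝ, ∀ᶠ x in atTop, mTail ν (y * x) / mTail ν x ≤ C

/-- Positively decreasing class `𝓟𝓓`. -/
def MemPD (ν : Measure ℝ) : Prop :=
  ∀ b : ℝ, 1 < b → ∃ c : ℝ, c < 1 ∧ ∀ᶠ x in atTop, mTail ν (b * x) / mTail ν x ≤ c

/-- Consistently varying class `𝓒`. -/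
def MemC (ν : Measure ℝ) : Prop :=
  Tendsto (fun b : ℝ => Filter.liminf (fun x => mTail ν (b * x) / mTail ν x) atTop)
    (nhdsWithin 1 (Set.Ioi 1)) (𝓝 1)

/-- `𝓐 = 𝓢 ∩ 𝓟𝓓`. -/
def MemA (ν : Measure ℝ) : Prop := MemS ν ∧ MemPD ν

/-- `𝓣 = 𝓛 ∩ 𝓟𝓓`. -/
def MemT (ν : Measure ℝ) : Prop := MemL ν ∧ MemPD ν

/-- Regular variation of index `-α` of the tail of `ν`. -/
def MemRV (ν : Measure ℝ) (α : ℝ) : Prop :=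
  ∀ t : ℝ, 0 < t → Tendsto (fun x => mTail ν (t * x) / mTail ν x) atTop (𝓝 (t ^ (-α)))

/-- Weak tail-equivalence `f ≍ g`. -/
def WeakTailEquiv (f g : ℝ → ℝ) : Prop :=
  ∃ c₁ c₂ : ℝ, 0 < c₁ ∧ ∀ᶠ x in atTop, c₁ * g x ≤ f x ∧ f x ≤ c₂ * g x

/-- (Standard) multivariate regular variation `F ∈ MRV(α, V, μ)` of the distribution of `X`. -/
structure IsMRV (P : Measure Ω) (X : Ω → Fin d → ℝ) (α : ℝ) (V : Measure ℝ)
    (μ : Measure (Fin d → ℝ)) : Prop where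
  alpha_pos : 0 < α
  V_prob : IsProbabilityMeasure V
  V_rv : MemRV V α
  mu_ne_zero : ∃ B : Set (Fin d → ℝ), (0 : Fin d → ℝ) ∉ closure B ∧ 0 < μ B
  mu_radon : ∀ B : Set (Fin d → ℝ), (0 : Fin d → ℝ) ∉ closure B → μ B ≠ ⊤
  tendsto : ∀ B : Set (Fin d → ℝ), MeasurableSet B → (0 : Fin d → ℝ) ∉ closure B →
    μ (frontier B) = 0 →
    Tendsto (fun x => vTail P B X x / mTail V x) atTop (𝓝 ((μ B).toReal))

/-- Support of a distribution on `ℝ`. -/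
def measSupport (ν : Measure ℝ) : Set ℝ := {t | ∀ U ∈ 𝓝 t, 0 < ν U}

/-- Assumption `CD_A`: conditional dependence of `(X, Θ)` on `A` with transfer function `h`:
`P[Y_A > x | Θ = t] ~ h(t) P[Y_A > x]` uniformly on the support of the distribution of `Θ`. -/
def CDA (P : Measure Ω) [IsFiniteMeasure P] (A : Set (Fin d → ℝ))
    (X : Ω → Fin d → ℝ) (Θ : Ω → ℝ) (h : ℝ → ℝ) : Prop :=
  ∀ ε : ℝ, 0 < ε → ∀ᶠ x in atTop, ∀ t ∈ measSupport (P.map Θ),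
    |((condDistrib (fun ω => suprA A (X ω)) Θ P) t (Set.Ioi x)).toReal /
        (h t * (P {ω | x < suprA A (X ω)}).toReal) - 1| ≤ ε

/-- Assumption `B_A`: `P[Θ > c x] = o(P[Θ Y_A > x])` for all `c > 0`. -/
def BA (P : Measure Ω) (A : Set (Fin d → ℝ)) (X : Ω → Fin d → ℝ) (Θ : Ω → ℝ) : Prop :=
  ∀ c : ℝ, 0 < c →
    Tendsto (fun x => (P {ω | c * x < Θ ω}).toReal /
      (P {ω | x < Θ ω * suprA A (X ω)}).toReal) atTop (𝓝 0)

/-- Assumption `B_A` in the form `P[Θ > c x] = o(P[Θ X ∈ x A])` for all `c > 0`. -/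
def BA' (P : Measure Ω) (A : Set (Fin d → ℝ)) (X : Ω → Fin d → ℝ) (Θ : Ω → ℝ) : Prop :=
  ∀ c : ℝ, 0 < c →
    Tendsto (fun x => (P {ω | c * x < Θ ω}).toReal /
      (P {ω | Θ ω • X ω ∈ x • A}).toReal) atTop (𝓝 0)

lemma suprA_lt_iff {A : Set (Fin d → ℝ)} (hA : IsRSet d A) (z : Fin d → ℝ) {x : ℝ} (hx : 0 < x) :
    x < suprA A z ↔ z ∈ x • A := by
  have h0 : (0 : Fin d → ℝ) ∈ Aᶜ := fun h => hA.zero_notMem_closure (subset_closure h)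
  have key : ∀ u : ℝ, 0 < u → (z ∈ u • A ↔ u⁻¹ • z ∈ A) := fun u hu =>
    Set.mem_smul_set_iff_inv_smul_mem₀ hu.ne' A z
  constructor
  · intro h
    have hne : {u : ℝ | 0 < u ∧ z ∈ u • A}.Nonempty := by
      by_contra hne
      rw [Set.not_nonempty_iff_eq_empty] at hne
      unfold suprA at h
      rw [hne, Real.sSup_empty] at h
      linarith
    obtain ⟨u, ⟨hu, hzu⟩, hxu⟩ := exists_lt_of_lt_csSup hne h
    rw [key x hx]
    rw [key u hu] at hzu
    by_contra hcon
    have hseg := hA.convex_compl h0 (show x⁻¹ • z ∈ Aᶜ from hcon)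
      (a := 1 - x / u) (b := x / u) (by
        have : x / u ≤ 1 := by rw [div_le_one hu]; exact hxu.le
        linarith) (by positivity) (by ring)
    rw [smul_zero, zero_add, smul_smul] at hseg
    have : x / u * x⁻¹ = u⁻¹ := by field_simp
    rw [this] at hseg
    exact hseg hzu
  · intro h
    have hbdd : BddAbove {u : ℝ | 0 < u ∧ z ∈ u • A} := by
      have hnhds : (closure A)ᶜ ∈ 𝓝 (0 : Fin d → ℝ) :=
        isClosed_closure.isOpen_compl.mem_nhds hA.zero_notMem_closure
      have ht : Tendsto (fun u : ℝ => u⁻¹ • z) atTop (𝓝 0) := by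
        have := (tendsto_inv_atTop_zero (𝕜 := ℝ)).smul_const z
        simpa using this
      obtain ⟨N, hN⟩ := eventually_atTop.1 (ht.eventually hnhds)
      refine ⟨N, ?_⟩
      rintro u ⟨hu, hzu⟩
      by_contra hcon
      exact hN u (not_le.1 hcon).le (subset_closure ((key u hu).1 hzu))
    rw [key x hx] at h
    have hcont : ContinuousAt (fun u : ℝ => u⁻¹ • z) x :=
      (continuousAt_inv₀ hx.ne').smul continuousAt_const
    have hev : ∀ᶠ u in 𝓝 x, u⁻¹ • z ∈ A := hcont.eventually (hA.isOpen.mem_nhds h)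
    obtain ⟨ε, hε, hball⟩ := Metric.eventually_nhds_iff.1 hev
    have hmem : x + ε / 2 ∈ {u : ℝ | 0 < u ∧ z ∈ u • A} := by
      refine ⟨by linarith, (key _ (by linarith)).2 (hball ?_)⟩
      rw [Real.dist_eq, add_sub_cancel_left, abs_of_pos (by linarith)]
      linarith
    have := le_csSup hbdd hmem
    unfold suprA
    linarith

lemma suprA_nonneg (A : Set (Fin d → ℝ)) (z : Fin d → ℝ) : 0 ≤ suprA A z :=
  Real.sSup_nonneg fun _ hu => hu.1.le

lemma measurable_suprA {A : Set (Fin d → ℝ)} (hA : IsRSet d A) : Measurable (suprA A) := by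
  have hpos : ∀ x : ℝ, 0 < x → MeasurableSet (suprA A ⁻¹' Set.Ioi x) := by
    intro x hx
    have : suprA A ⁻¹' Set.Ioi x = x • A := by
      ext z; exact suprA_lt_iff hA z hx
    rw [this]
    exact (hA.isOpen.smul₀ hx.ne').measurableSet
  refine measurable_of_Ioi fun x => ?_
  rcases lt_trichotomy x 0 with hx | hx | hx
  · have : suprA A ⁻¹' Set.Ioi x = Set.univ := by
      ext z; simpa using lt_of_lt_of_le hx (suprA_nonneg A z)
    rw [this]; exact MeasurableSet.univ
  · subst hx
    have : suprA A ⁻¹' Set.Ioi 0 = ⋃ n : ℕ, suprA A ⁻¹' Set.Ioi (1 / ((n : ℝ) + 1)) := by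
      ext z
      simp only [Set.mem_preimage, Set.mem_Ioi, Set.mem_iUnion]
      constructor
      · intro h; exact exists_nat_one_div_lt h
      · rintro ⟨n, hn⟩
        exact lt_trans (by positivity) hn
    rw [this]
    exact MeasurableSet.iUnion fun n => hpos _ (by positivity)
  · exact hpos x hx

lemma mTail_FA (P : Measure Ω) {A : Set (Fin d → ℝ)} (hA : IsRSet d A) {X : Ω → Fin d → ℝ}
    (hX : Measurable X) {x : ℝ} (hx : 0 < x) : mTail (FA P A X) x = vTail P A X x := by
  unfold mTail FA vTail
  rw [Measure.map_apply (show Measurable fun ω => suprA A (X ω) from (measurable_suprA hA).comp hX)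
    measurableSet_Ioi]
  congr 2
  ext ω
  exact suprA_lt_iff hA (X ω) hx

lemma FA_neg (P : Measure Ω) {A : Set (Fin d → ℝ)} (hA : IsRSet d A) {X : Ω → Fin d → ℝ}
    (hX : Measurable X) : FA P A X (Set.Iio 0) = 0 := by
  unfold FA
  rw [Measure.map_apply (show Measurable fun ω => suprA A (X ω) from (measurable_suprA hA).comp hX)
    measurableSet_Iio]
  convert measure_empty (μ := P)
  ext ω
  simpa using suprA_nonneg A (X ω)

lemma mTail_anti (μ : Measure ℝ) [IsProbabilityMeasure μ] {x y : ℝ} (h : x ≤ y) :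
    mTail μ y ≤ mTail μ x :=
  measureReal_mono (μ := μ) (Set.Ioi_subset_Ioi h)

lemma mTail_nonneg (μ : Measure ℝ) (x : ℝ) : 0 ≤ mTail μ x := ENNReal.toReal_nonneg

lemma mTail_tendsto (μ : Measure ℝ) [IsProbabilityMeasure μ] :
    Tendsto (mTail μ) atTop (𝓝 0) := by
  have h := (tendsto_cdf_atTop μ).const_sub 1
  rw [sub_self] at h
  refine h.congr fun x => ?_
  rw [cdf_eq_real, ← Set.compl_Ioi, probReal_compl_eq_one_sub measurableSet_Ioi]
  simp [mTail, Measure.real]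

lemma real_Icc (μ : Measure ℝ) [IsProbabilityMeasure μ] (h0 : μ (Set.Iio 0) = 0) {v : ℝ}
    (hv : 0 ≤ v) : μ.real (Set.Icc 0 v) = 1 - mTail μ v := by
  have h1 : Set.Iic v = Set.Iio 0 ∪ Set.Icc 0 v := by
    rw [Set.Iio_union_Icc_eq_Iic hv]
  have h2 : μ.real (Set.Iic v) = μ.real (Set.Icc 0 v) := by
    rw [h1, Measure.real, Measure.real]
    congr 1
    refine le_antisymm ((measure_union_le _ _).trans ?_) (measure_mono Set.subset_union_right)
    rw [h0, zero_add]
  rw [← h2, ← Set.compl_Ioi, probReal_compl_eq_one_sub measurableSet_Ioi]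
  rfl

lemma real_Ici (μ : Measure ℝ) [IsProbabilityMeasure μ] (h0 : μ (Set.Iio 0) = 0) :
    μ.real (Set.Ici 0) = 1 := by
  rw [← Set.compl_Iio, probReal_compl_eq_one_sub measurableSet_Iio, Measure.real, h0]
  simp

lemma real_Ioc (μ : Measure ℝ) [IsProbabilityMeasure μ] {a x : ℝ} (hax : a ≤ x) :
    μ.real (Set.Ioc a x) = mTail μ a - mTail μ x := by
  have h : Set.Ioc a x ∪ Set.Ioi x = Set.Ioi a := Set.Ioc_union_Ioi_eq_Ioi hax
  have h2 : μ.real (Set.Ioc a x ∪ Set.Ioi x) = μ.real (Set.Ioc a x) + μ.real (Set.Ioi x) :=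
    measureReal_union (Set.Ioc_disjoint_Ioi le_rfl) measurableSet_Ioi
  rw [h] at h2
  unfold mTail
  change _ = μ.real _ - μ.real _
  linarith

/-- Both coordinates exceed `v` and the sum exceeds `x`. -/
def bigSet (v x : ℝ) : Set (ℝ × ℝ) := {p | v < p.1 ∧ v < p.2 ∧ x < p.1 + p.2}

lemma measurableSet_bigSet (v x : ℝ) : MeasurableSet (bigSet v x) := by
  unfold bigSet
  refine (measurableSet_lt measurable_const measurable_fst).inter
    ((measurableSet_lt measurable_const measurable_snd).inter
    (measurableSet_lt measurable_const (measurable_fst.add measurable_snd)))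

lemma mTail_mConv (μ : Measure ℝ) [IsProbabilityMeasure μ] (x : ℝ) :
    mTail (mConv μ μ) x = (μ.prod μ).real {p | x < p.1 + p.2} := by
  unfold mTail mConv
  rw [Measure.map_apply (show Measurable fun p : ℝ × ℝ => p.1 + p.2 from
    measurable_fst.add measurable_snd) measurableSet_Ioi]
  rfl

lemma conv_lower (μ : Measure ℝ) [IsProbabilityMeasure μ] (h0 : μ (Set.Iio 0) = 0) {v x : ℝ}
    (hv : 0 ≤ v) (hvx : v ≤ x) :
    (μ.prod μ).real (bigSet v x) + 2 * ((1 - mTail μ v) * mTail μ x) ≤ mTail (mConv μ μ) x := by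
  rw [mTail_mConv]
  have hs : bigSet v x ∪ (Set.Icc 0 v ×ˢ Set.Ioi x) ∪ (Set.Ioi x ×ˢ Set.Icc 0 v)
      ⊆ {p : ℝ × ℝ | x < p.1 + p.2} := by
    rintro ⟨p, q⟩ ((h | h) | h)
    · exact h.2.2
    · simp only [Set.mem_prod, Set.mem_Icc, Set.mem_Ioi] at h
      simp only [Set.mem_ofPred_eq]; linarith
    · simp only [Set.mem_prod, Set.mem_Icc, Set.mem_Ioi] at h
      simp only [Set.mem_ofPred_eq]; linarith
  have h1 := measureReal_mono (μ := μ.prod μ) hs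
  rw [measureReal_union _ (measurableSet_Ioi.prod measurableSet_Icc),
    measureReal_union _ (measurableSet_Icc.prod measurableSet_Ioi),
    measureReal_prod_prod, measureReal_prod_prod, real_Icc μ h0 hv] at h1
  · have : μ.real (Set.Ioi x) = mTail μ x := rfl
    rw [this] at h1
    linarith
  · rw [Set.disjoint_left]
    rintro ⟨p, q⟩ h h'
    simp only [Set.mem_prod, Set.mem_Icc, Set.mem_Ioi, bigSet, Set.mem_ofPred_eq] at h h'
    linarith
  · rw [Set.disjoint_left]
    rintro ⟨p, q⟩ h h'
    simp only [Set.mem_prod, Set.mem_Icc, Set.mem_Ioi, bigSet, Set.mem_ofPred_eq,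
      Set.mem_union] at h h'
    rcases h with h | h <;> linarith

lemma conv_upper (μ : Measure ℝ) [IsProbabilityMeasure μ] (v x : ℝ) :
    mTail (mConv μ μ) x ≤ (μ.prod μ).real (bigSet v x) + 2 * mTail μ (x - v) := by
  rw [mTail_mConv]
  have hs : {p : ℝ × ℝ | x < p.1 + p.2} ⊆
      bigSet v x ∪ (Set.univ ×ˢ Set.Ioi (x - v)) ∪ (Set.Ioi (x - v) ×ˢ Set.univ) := by
    rintro ⟨p, q⟩ h
    simp only [Set.mem_prod, Set.mem_univ, Set.mem_Ioi, bigSet, Set.mem_ofPred_eq,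
      Set.mem_union, true_and, and_true] at h ⊢
    by_cases h1 : v < p
    · by_cases h2 : v < q
      · exact Or.inl (Or.inl ⟨h1, h2, h⟩)
      · right; linarith
    · left; right; linarith
  have h1 := measureReal_mono (μ := μ.prod μ) hs
  have h2 := measureReal_union_le (μ := μ.prod μ)
    (bigSet v x ∪ (Set.univ ×ˢ Set.Ioi (x - v))) (Set.Ioi (x - v) ×ˢ Set.univ)
  have h3 := measureReal_union_le (μ := μ.prod μ) (bigSet v x) (Set.univ ×ˢ Set.Ioi (x - v))
  rw [measureReal_prod_prod, probReal_univ] at h2 h3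
  have : μ.real (Set.Ioi (x - v)) = mTail μ (x - v) := rfl
  rw [this] at h2 h3
  linarith

lemma big_section (v x a : ℝ) :
    Prod.mk a ⁻¹' bigSet v x = if v < a then Set.Ioi (max v (x - a)) else ∅ := by
  ext b
  split_ifs with h
  · simp only [bigSet, Set.mem_preimage, Set.mem_ofPred_eq, Set.mem_Ioi, max_lt_iff, h, true_and]
    constructor
    · rintro ⟨h1, h2⟩; exact ⟨h1, by linarith⟩
    · rintro ⟨h1, h2⟩; exact ⟨h1, by linarith⟩
  · simp [bigSet, h]

lemma big_section' (v x a : ℝ) :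
    (fun b => (b, a)) ⁻¹' bigSet v x = if v < a then Set.Ioi (max v (x - a)) else ∅ := by
  rw [← big_section]
  ext b
  simp only [bigSet, Set.mem_preimage, Set.mem_ofPred_eq, add_comm]
  tauto

lemma big_bound (μ ν : Measure ℝ) [IsProbabilityMeasure μ] [IsProbabilityMeasure ν] {M v : ℝ}
    (hM : 0 ≤ M) (h : ∀ y, v ≤ y → mTail ν y ≤ M * mTail μ y) (x : ℝ) :
    (ν.prod ν).real (bigSet v x) ≤ M ^ 2 * (μ.prod μ).real (bigSet v x) := by
  have hE : ∀ y, v ≤ y → ν (Set.Ioi y) ≤ ENNReal.ofReal M * μ (Set.Ioi y) := by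
    intro y hy
    have := h y hy
    unfold mTail at this
    rw [← ENNReal.ofReal_toReal (measure_ne_top ν (Set.Ioi y)),
      ← ENNReal.ofReal_toReal (measure_ne_top μ (Set.Ioi y)), ← ENNReal.ofReal_mul hM]
    exact ENNReal.ofReal_le_ofReal this
  have hS : ∀ a, ν (if v < a then Set.Ioi (max v (x - a)) else ∅) ≤
      ENNReal.ofReal M * μ (if v < a then Set.Ioi (max v (x - a)) else ∅) := by
    intro a
    split_ifs
    · exact hE _ (le_max_left _ _)
    · simp
  have hm := measurableSet_bigSet v x
  have h1 : (ν.prod ν) (bigSet v x) ≤ ENNReal.ofReal M * (ν.prod μ) (bigSet v x) := by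
    rw [Measure.prod_apply hm, Measure.prod_apply hm,
      ← lintegral_const_mul' _ _ ENNReal.ofReal_ne_top]
    refine lintegral_mono fun a => ?_
    simp only [big_section]
    exact hS a
  have h2 : (ν.prod μ) (bigSet v x) ≤ ENNReal.ofReal M * (μ.prod μ) (bigSet v x) := by
    rw [Measure.prod_apply_symm hm, Measure.prod_apply_symm hm,
      ← lintegral_const_mul' _ _ ENNReal.ofReal_ne_top]
    refine lintegral_mono fun a => ?_
    simp only [big_section']
    exact hS a
  have h3 : (ν.prod ν) (bigSet v x) ≤
      ENNReal.ofReal M * (ENNReal.ofReal M * (μ.prod μ) (bigSet v x)) :=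
    h1.trans (by gcongr)
  have h4 := ENNReal.toReal_mono (by finiteness) h3
  rw [ENNReal.toReal_mul, ENNReal.toReal_mul, ENNReal.toReal_ofReal hM] at h4
  unfold Measure.real
  linarith

lemma memL_of_memS (μ : Measure ℝ) [IsProbabilityMeasure μ] (h0 : μ (Set.Iio 0) = 0)
    (hpos : ∀ x, 0 < mTail μ x) (hS : MemS μ) : MemL μ := by
  intro a ha
  have hup : Tendsto (fun x => (mTail (mConv μ μ) x / mTail μ x - 1 - (1 - mTail μ a)) /
      (mTail μ a - mTail μ x)) atTop (𝓝 ((2 - 1 - (1 - mTail μ a)) / (mTail μ a - 0))) := by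
    have hS' : Tendsto (fun x => mTail (mConv μ μ) x / mTail μ x) atTop (𝓝 2) := hS
    refine ((hS'.sub_const 1).sub_const _).div ((mTail_tendsto μ).const_sub _) ?_
    rw [sub_zero]; exact (hpos a).ne'
  have h1 : (2 - 1 - (1 - mTail μ a)) / (mTail μ a - 0) = 1 := by
    have := (hpos a).ne'
    field_simp
    ring
  rw [h1] at hup
  refine tendsto_of_tendsto_of_tendsto_of_le_of_le' tendsto_const_nhds hup ?_ ?_
  · refine Eventually.of_forall fun x => ?_
    rw [le_div_iff₀ (hpos x), one_mul]
    exact mTail_anti μ (by linarith)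
  · filter_upwards [eventually_ge_atTop a,
      (mTail_tendsto μ).eventually (eventually_lt_nhds (hpos a))] with x hx hxa
    have hs : (Set.Ioi x ×ˢ Set.Ici 0) ∪ (Set.Icc 0 a ×ˢ Set.Ioi x) ∪
        (Set.Ioc a x ×ˢ Set.Ioi (x - a)) ⊆ {p : ℝ × ℝ | x < p.1 + p.2} := by
      rintro ⟨p, q⟩ ((h | h) | h) <;>
      · simp only [Set.mem_prod, Set.mem_Icc, Set.mem_Ioi, Set.mem_Ici, Set.mem_Ioc] at h
        simp only [Set.mem_ofPred_eq]; linarith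
    have h1 := measureReal_mono (μ := μ.prod μ) hs
    rw [← mTail_mConv, measureReal_union _ (measurableSet_Ioc.prod measurableSet_Ioi),
      measureReal_union _ (measurableSet_Icc.prod measurableSet_Ioi),
      measureReal_prod_prod, measureReal_prod_prod, measureReal_prod_prod,
      real_Icc μ h0 ha.le, real_Ici μ h0, real_Ioc μ hx] at h1
    · have e1 : μ.real (Set.Ioi x) = mTail μ x := rfl
      have e2 : μ.real (Set.Ioi (x - a)) = mTail μ (x - a) := rfl
      rw [e1, e2] at h1
      rw [le_div_iff₀ (by linarith)]
      have hx0 := hpos x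
      have : mTail μ (x - a) / mTail μ x * (mTail μ a - mTail μ x) * mTail μ x ≤
        (mTail (mConv μ μ) x / mTail μ x - 1 - (1 - mTail μ a)) * mTail μ x := by
        have e3 : mTail μ (x - a) / mTail μ x * (mTail μ a - mTail μ x) * mTail μ x =
          (mTail μ a - mTail μ x) * mTail μ (x - a) := by field_simp
        have e4 : (mTail (mConv μ μ) x / mTail μ x - 1 - (1 - mTail μ a)) * mTail μ x
          = mTail (mConv μ μ) x - mTail μ x - (1 - mTail μ a) * mTail μ x := by field_simp
        rw [e3, e4]; linarith
      exact le_of_mul_le_mul_right this hx0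
    · rw [Set.disjoint_left]
      rintro ⟨p, q⟩ h h'
      simp only [Set.mem_prod, Set.mem_Icc, Set.mem_Ioi, Set.mem_Ici] at h h'
      linarith
    · rw [Set.disjoint_left]
      rintro ⟨p, q⟩ h h'
      simp only [Set.mem_prod, Set.mem_Icc, Set.mem_Ioi, Set.mem_Ici, Set.mem_Ioc,
        Set.mem_union] at h h'
      rcases h with h | h <;> linarith

/-- Ratio transfer. -/
lemma ratio_tendsto {f g : ℝ → ℝ} (hf : ∀ x, 0 < f x) (hg : ∀ x, 0 < g x) {c : ℝ} (hc : 0 < c)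
    (h : Tendsto (fun x => g x / f x) atTop (𝓝 c)) {φ : ℝ → ℝ} (hφ : Tendsto φ atTop atTop) :
    ∃ r : ℝ → ℝ, Tendsto r atTop (𝓝 1) ∧ (∀ x, 0 < r x) ∧
      ∀ x, g (φ x) / g x = r x * (f (φ x) / f x) := by
  refine ⟨fun x => (g (φ x) / f (φ x)) / (g x / f x), ?_, ?_, ?_⟩
  · have := (h.comp hφ).div h hc.ne'
    rwa [div_self hc.ne'] at this
  · intro x
    have := hf x; have := hg x; have := hf (φ x); have := hg (φ x)
    positivity
  · intro x
    have := (hf x).ne'; have := (hg x).ne'; have := (hf (φ x)).ne'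
    field_simp

lemma memPD_transfer (μ ν : Measure ℝ) (hf : ∀ x, 0 < mTail μ x)
    (hg : ∀ x, 0 < mTail ν x) {c : ℝ} (hc : 0 < c)
    (h : Tendsto (fun x => mTail ν x / mTail μ x) atTop (𝓝 c))
    (hμ : MemPD μ) : MemPD ν := by
  intro b hb
  obtain ⟨k, hk, hev⟩ := hμ b hb
  obtain ⟨r, hr, hr0, hreq⟩ := ratio_tendsto hf hg hc h (φ := fun x => b * x)
    (tendsto_id.const_mul_atTop (by linarith))
  have hk0 : 0 ≤ k := by
    obtain ⟨x, hx⟩ := hev.exists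
    exact (div_pos (hf _) (hf x)).le.trans hx
  have h2 : Tendsto (fun x => r x * k) atTop (𝓝 (1 * k)) := hr.mul_const k
  refine ⟨(1 + k) / 2, by linarith, ?_⟩
  filter_upwards [hev, h2.eventually (eventually_lt_nhds (show 1 * k < (1 + k) / 2 by linarith))]
    with x hx hx2
  rw [hreq x]
  exact (mul_le_mul_of_nonneg_left hx (hr0 x).le).trans hx2.le

lemma memD_transfer (μ ν : Measure ℝ) (hf : ∀ x, 0 < mTail μ x)
    (hg : ∀ x, 0 < mTail ν x) {c : ℝ} (hc : 0 < c)
    (h : Tendsto (fun x => mTail ν x / mTail μ x) atTop (𝓝 c))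
    (hμ : MemD μ) : MemD ν := by
  intro y hy hy1
  obtain ⟨k, hev⟩ := hμ y hy hy1
  obtain ⟨r, hr, hr0, hreq⟩ := ratio_tendsto hf hg hc h (φ := fun x => y * x)
    (tendsto_id.const_mul_atTop hy)
  have h2 : Tendsto (fun x => r x * k) atTop (𝓝 (1 * k)) := hr.mul_const k
  refine ⟨1 * k + 1, ?_⟩
  filter_upwards [hev, h2.eventually (eventually_lt_nhds (show 1 * k < 1 * k + 1 by linarith))]
    with x hx hx2
  rw [hreq x]
  exact (mul_le_mul_of_nonneg_left hx (hr0 x).le).trans hx2.le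

lemma memL_transfer (μ ν : Measure ℝ) (hf : ∀ x, 0 < mTail μ x)
    (hg : ∀ x, 0 < mTail ν x) {c : ℝ} (hc : 0 < c)
    (h : Tendsto (fun x => mTail ν x / mTail μ x) atTop (𝓝 c))
    (hμ : MemL μ) : MemL ν := by
  intro a ha
  obtain ⟨r, hr, hr0, hreq⟩ := ratio_tendsto hf hg hc h (φ := fun x => x - a)
    (tendsto_atTop_add_const_right _ (-a) tendsto_id)
  have := hr.mul (hμ a ha)
  rw [one_mul] at this
  exact this.congr fun x => (hreq x).symm

lemma memS_transfer (μ ν : Measure ℝ) [IsProbabilityMeasure μ] [IsProbabilityMeasure ν]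
    (hf : ∀ x, 0 < mTail μ x)
    (hg : ∀ x, 0 < mTail ν x) {c : ℝ} (hc : 0 < c)
    (h : Tendsto (fun x => mTail ν x / mTail μ x) atTop (𝓝 c))
    (hμ0 : μ (Set.Iio 0) = 0) (hν0 : ν (Set.Iio 0) = 0) (hμ : MemS μ) : MemS ν := by
  have hLν : MemL ν := memL_transfer μ ν hf hg hc h (memL_of_memS μ hμ0 hf hμ)
  have hS : Tendsto (fun x => mTail (mConv μ μ) x / mTail μ x) atTop (𝓝 2) := hμ
  have hinv : Tendsto (fun x => mTail μ x / mTail ν x) atTop (𝓝 c⁻¹) :=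
    (h.inv₀ hc.ne').congr fun x => inv_div _ _
  obtain ⟨N, hN⟩ := eventually_atTop.1 (h.eventually (eventually_lt_nhds (lt_add_one c)))
  have hM : ∀ y, N ≤ y → mTail ν y ≤ (c + 1) * mTail μ y := fun y hy =>
    ((div_lt_iff₀ (hf y)).1 (hN y hy)).le
  refine tendsto_order.2 ⟨fun a ha => ?_, fun a ha => ?_⟩
  · have h1 : Tendsto (fun v => 2 * (1 - mTail ν v)) atTop (𝓝 (2 * (1 - 0))) :=
      ((mTail_tendsto ν).const_sub 1).const_mul 2
    obtain ⟨v, hv0, hv⟩ := ((eventually_ge_atTop (0 : ℝ)).and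
      (h1.eventually (eventually_gt_nhds (show a < 2 * (1 - 0) by linarith)))).exists
    filter_upwards [eventually_ge_atTop v] with x hx
    refine hv.trans_le ?_
    rw [le_div_iff₀ (hg x)]
    have := conv_lower ν hν0 hv0 hx
    have h3 : 0 ≤ (ν.prod ν).real (bigSet v x) := measureReal_nonneg
    linarith
  · have h1 : Tendsto (fun v => (c + 1) ^ 2 * (2 * mTail μ v) * c⁻¹ + 2 * 1) atTop
        (𝓝 ((c + 1) ^ 2 * (2 * 0) * c⁻¹ + 2 * 1)) :=
      ((((mTail_tendsto μ).const_mul 2).const_mul _).mul_const _).add_const _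
    obtain ⟨v, hv0, hvN, hv⟩ := ((eventually_gt_atTop (0 : ℝ)).and ((eventually_ge_atTop N).and
      (h1.eventually (eventually_lt_nhds
        (show (c + 1) ^ 2 * (2 * 0) * c⁻¹ + 2 * 1 < a by linarith))))).exists
    have h2 : Tendsto (fun x => (c + 1) ^ 2 *
        (mTail (mConv μ μ) x / mTail μ x - 2 * (1 - mTail μ v)) * (mTail μ x / mTail ν x)
        + 2 * (mTail ν (x - v) / mTail ν x)) atTop
        (𝓝 ((c + 1) ^ 2 * (2 - 2 * (1 - mTail μ v)) * c⁻¹ + 2 * 1)) :=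
      (((hS.sub_const _).const_mul _).mul hinv).add ((hLν v hv0).const_mul 2)
    have h3 : (c + 1) ^ 2 * (2 - 2 * (1 - mTail μ v)) * c⁻¹ + 2 * 1 < a := by
      have : 2 - 2 * (1 - mTail μ v) = 2 * mTail μ v := by ring
      rw [this]; exact hv
    filter_upwards [eventually_ge_atTop v, h2.eventually (eventually_lt_nhds h3)] with x hx hx2
    refine lt_of_le_of_lt ?_ hx2
    rw [div_le_iff₀ (hg x)]
    have b1 := conv_upper ν v x
    have b2 := big_bound μ ν (M := c + 1) (v := v) (by linarith)
      (fun y hy => hM y (hvN.trans hy)) x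
    have b3 := conv_lower μ hμ0 hv0.le hx
    have b4 : (c + 1) ^ 2 * (μ.prod μ).real (bigSet v x) ≤
        (c + 1) ^ 2 * (mTail (mConv μ μ) x - 2 * ((1 - mTail μ v) * mTail μ x)) :=
      mul_le_mul_of_nonneg_left (by linarith) (by positivity)
    have e : ((c + 1) ^ 2 *
        (mTail (mConv μ μ) x / mTail μ x - 2 * (1 - mTail μ v)) * (mTail μ x / mTail ν x)
        + 2 * (mTail ν (x - v) / mTail ν x)) * mTail ν x =
        (c + 1) ^ 2 * (mTail (mConv μ μ) x - 2 * ((1 - mTail μ v) * mTail μ x))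
        + 2 * mTail ν (x - v) := by
      have := (hf x).ne'; have := (hg x).ne'
      field_simp
    rw [e]
    linarith

/-- Closure of the classes `𝓟𝓓_A, 𝓣_A, 𝓐_A, (𝓓∩𝓟𝓓)_A, (𝓓∩𝓐)_A`
with respect to strong tail-equivalence on `A`. -/
theorem statement2 (P : Measure Ω) [IsProbabilityMeasure P]
    (A : Set (Fin d → ℝ)) (hA : IsRSet d A)
    (X₁ X₂ : Ω → Fin d → ℝ) (hX₁ : Measurable X₁) (hX₂ : Measurable X₂)
    (c : ℝ) (hc : 0 < c)
    (hequiv : Tendsto (fun x => vTail P A X₂ x / vTail P A X₁ x) atTop (𝓝 c)) :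
    (MemPD (FA P A X₁) → MemPD (FA P A X₂)) ∧
    (MemT (FA P A X₁) → MemT (FA P A X₂)) ∧
    (MemA (FA P A X₁) → MemA (FA P A X₂)) ∧
    (MemD (FA P A X₁) ∧ MemPD (FA P A X₁) → MemD (FA P A X₂) ∧ MemPD (FA P A X₂)) ∧
    (MemD (FA P A X₁) ∧ MemA (FA P A X₁) → MemD (FA P A X₂) ∧ MemA (FA P A X₂)) := by
  have hm₁ : IsProbabilityMeasure (FA P A X₁) :=
    Measure.isProbabilityMeasure_map ((measurable_suprA hA).comp hX₁).aemeasurable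
  have hm₂ : IsProbabilityMeasure (FA P A X₂) :=
    Measure.isProbabilityMeasure_map ((measurable_suprA hA).comp hX₂).aemeasurable
  have h : Tendsto (fun x => mTail (FA P A X₂) x / mTail (FA P A X₁) x) atTop (𝓝 c) := by
    refine hequiv.congr' ?_
    filter_upwards [eventually_gt_atTop 0] with x hx
    rw [mTail_FA P hA hX₁ hx, mTail_FA P hA hX₂ hx]
  have hev := h.eventually (eventually_gt_nhds hc)
  have hpos : ∀ x, 0 < mTail (FA P A X₁) x ∧ 0 < mTail (FA P A X₂) x := by
    intro x
    obtain ⟨y, hy, hxy⟩ := (hev.and (eventually_ge_atTop x)).exists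
    have n1 := mTail_nonneg (FA P A X₁) y
    have n2 := mTail_nonneg (FA P A X₂) y
    have p1 : 0 < mTail (FA P A X₁) y := by
      refine lt_of_le_of_ne n1 fun he => ?_
      rw [← he, div_zero] at hy
      exact lt_irrefl _ hy
    have p2 : 0 < mTail (FA P A X₂) y := by
      refine lt_of_le_of_ne n2 fun he => ?_
      rw [← he, zero_div] at hy
      exact lt_irrefl _ hy
    exact ⟨p1.trans_le (mTail_anti _ hxy), p2.trans_le (mTail_anti _ hxy)⟩
  have hf := fun x => (hpos x).1
  have hg := fun x => (hpos x).2
  have tPD := memPD_transfer _ _ hf hg hc h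
  have tD := memD_transfer _ _ hf hg hc h
  have tL := memL_transfer _ _ hf hg hc h
  have tS := memS_transfer _ _ hf hg hc h (FA_neg P hA hX₁) (FA_neg P hA hX₂)
  exact ⟨tPD, fun k => ⟨tL k.1, tPD k.2⟩, fun k => ⟨tS k.1, tPD k.2⟩,
    fun k => ⟨tD k.1, tPD k.2⟩, fun k => ⟨tD k.1, tS k.2.1, tPD k.2.2⟩⟩

end Paper
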